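/- arXiv:1712.08453 — 6 statements merged into one kernel-verified Lean document; each statement's English description precedes it below -/
import Mathlib

section
/- Assume the Hodge-index condition holds for T. If g preserves T and g is unipotent (i.e. (g − id)^(dim V) = 0), then (g − id)⁵ = 0; equivalently, every Jordan block of g (for the eigenvalue 1) has dimension at most 5. -/
open TensorProduct in
theorem homog_aux {Q : Type*} [CommRing Q] [Algebra ℝ Q] (k : ℕ) (a b : Q)
    (ha : a ^ (k+6) = 0) (hb : b ^ (k+6) = 0) (hab : (a + b) ^ (k+6) = 0) :
    a ^ (k+4) * b ^ (k+4) = 0 := by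
  have ha' : ∀ n, k + 6 ≤ n → a ^ n = 0 := fun n h => pow_eq_zero_of_le h ha
  have hb' : ∀ n, k + 6 ≤ n → b ^ n = 0 := fun n h => pow_eq_zero_of_le h hb
  -- the relation obtained by multiplying by `a^i b^j`
  have key : ∀ i j : ℕ, i + j = k + 2 → i ≤ 2 →
      ((k+6).choose (i+1) : ℝ) • (a ^ (k+5) * b ^ (k+3))
      + ((k+6).choose (i+2) : ℝ) • (a ^ (k+4) * b ^ (k+4))
      + ((k+6).choose (i+3) : ℝ) • (a ^ (k+3) * b ^ (k+5)) = 0 := by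
    intro i j hij hi
    have h0 : a ^ i * b ^ j * (a + b) ^ (k+6) = 0 := by rw [hab, mul_zero]
    rw [add_comm a b, add_pow, Finset.mul_sum] at h0
    have hsub : ({i+1, i+2, i+3} : Finset ℕ) ⊆ Finset.range (k+6+1) := by
      intro x hx
      simp only [Finset.mem_insert, Finset.mem_singleton] at hx
      simp only [Finset.mem_range]
      omega
    rw [← Finset.sum_subset hsub] at h0
    · rw [Finset.sum_insert (by simp), Finset.sum_insert (by simp), Finset.sum_singleton] at h0
      rw [← h0]
      have e : ∀ p q r s : ℕ, ∀ c : ℕ, i + r = p → j + s = q →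
          (c : ℝ) • (a ^ p * b ^ q) = a ^ i * b ^ j * (b ^ s * a ^ r * (c : Q)) := by
        intro p q r s c hp hq
        subst hp hq
        rw [Algebra.smul_def, map_natCast]
        ring
      rw [e (k+5) (k+3) (k+6-(i+1)) (i+1) _ (by omega) (by omega),
        e (k+4) (k+4) (k+6-(i+2)) (i+2) _ (by omega) (by omega),
        e (k+3) (k+5) (k+6-(i+3)) (i+3) _ (by omega) (by omega)]
      ring
    · intro x hx hx2
      simp only [Finset.mem_insert, Finset.mem_singleton, Finset.mem_range] at hx hx2
      by_cases h : x ≤ i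
      · have : a ^ (i + (k+6-x)) = 0 := ha' _ (by omega)
        rw [pow_add] at this
        linear_combination (b ^ j * b ^ x * ((k+6).choose x : Q)) * this
      · have : b ^ (j + x) = 0 := hb' _ (by omega)
        rw [pow_add] at this
        linear_combination (a ^ i * a ^ (k+6-x) * ((k+6).choose x : Q)) * this
  have r0 := key 0 (k+2) (by omega) (by omega)
  have r1 := key 1 (k+1) (by omega) (by omega)
  have r2 := key 2 k (by omega) (by omega)
  generalize a ^ (k+5) * b ^ (k+3) = X at *
  generalize a ^ (k+4) * b ^ (k+4) = Y at *
  generalize a ^ (k+3) * b ^ (k+5) = Z at *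
  have c1 : ((k+6).choose 1 : ℝ) = k + 6 := by simp
  have step : ∀ s : ℕ, s ≤ 5 →
      ((k+6).choose (s+1) : ℝ) * (s+1) = ((k+6).choose s : ℝ) * (k + 6 - s) := by
    intro s hs
    have := Nat.choose_succ_right_eq (k+6) s
    have h2 : ((k+6-s : ℕ) : ℝ) = k + 6 - s := by
      rw [Nat.cast_sub (by omega)]; push_cast; ring
    rw [← h2]; exact_mod_cast this
  have s1 := step 1 (by omega)
  have s2 := step 2 (by omega)
  have s3 := step 3 (by omega)
  have s4 := step 4 (by omega)
  norm_num at s1 s2 s3 s4 r0 r1 r2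
  have hk : (0 : ℝ) ≤ k := Nat.cast_nonneg k
  generalize (k : ℝ) = κ at *
  have c2 : ((k+6).choose 2 : ℝ) = (κ+6)*(κ+5)/2 := by linarith
  have c3 : ((k+6).choose 3 : ℝ) = (κ+6)*(κ+5)*(κ+4)/6 := by
    rw [c2] at s2; linarith
  have c4 : ((k+6).choose 4 : ℝ) = (κ+6)*(κ+5)*(κ+4)*(κ+3)/24 := by
    rw [c3] at s3; linarith
  have c5 : ((k+6).choose 5 : ℝ) = (κ+6)*(κ+5)*(κ+4)*(κ+3)*(κ+2)/120 := by
    rw [c4] at s4; linarith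
  rw [c2, c3] at r0
  rw [c2, c3, c4] at r1
  rw [c3, c4, c5] at r2
  have p0 : X + ((κ+5)/2) • Y + ((κ+5)*(κ+4)/6) • Z = 0 := by
    have := congrArg (fun t => (1/(κ+6)) • t) r0
    simp only [smul_add, smul_smul, smul_zero] at this
    rw [← this]
    match_scalars <;> field_simp
  have p1 : X + ((κ+4)/3) • Y + ((κ+4)*(κ+3)/12) • Z = 0 := by
    have := congrArg (fun t => (2/((κ+6)*(κ+5))) • t) r1
    simp only [smul_add, smul_smul, smul_zero] at this
    rw [← this]
    match_scalars <;> field_simp <;> ring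
  have p2 : X + ((κ+3)/4) • Y + ((κ+3)*(κ+2)/20) • Z = 0 := by
    have := congrArg (fun t => (6/((κ+6)*(κ+5)*(κ+4))) • t) r2
    simp only [smul_add, smul_smul, smul_zero] at this
    rw [← this]
    match_scalars <;> field_simp <;> ring
  have q0 : Y + ((κ+4)/2) • Z = 0 := by
    have : Y + ((κ+4)/2) • Z = (6/(κ+7)) • ((X + ((κ+5)/2) • Y + ((κ+5)*(κ+4)/6) • Z)
      - (X + ((κ+4)/3) • Y + ((κ+4)*(κ+3)/12) • Z)) := by
      match_scalars <;> field_simp <;> ring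
    rw [this, p0, p1]; simp
  have q1 : Y + ((κ+3)*2/5) • Z = 0 := by
    have : Y + ((κ+3)*2/5) • Z = (12/(κ+7)) • ((X + ((κ+4)/3) • Y + ((κ+4)*(κ+3)/12) • Z)
      - (X + ((κ+3)/4) • Y + ((κ+3)*(κ+2)/20) • Z)) := by
      match_scalars <;> field_simp <;> ring
    rw [this, p1, p2]; simp
  have hZ : Z = 0 := by
    have : Z = (10/(κ+8)) • ((Y + ((κ+4)/2) • Z) - (Y + ((κ+3)*2/5) • Z)) := by
      match_scalars <;> field_simp <;> ring
    rw [this, q0, q1]; simp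
  rw [hZ] at q0
  simpa using q0

theorem group_aux {Q : Type*} [CommRing Q] [Algebra ℝ Q] (k : ℕ) (a b : Q)
    (ha : a ^ (k+6) = 0) (hb : b ^ (k+6) = 0) (hab : ((1 + a) * (1 + b) - 1) ^ (k+6) = 0) :
    a ^ (k+4) * b ^ (k+4) = 0 := by
  have h := homog_aux k (a * (1 + b)) b (by rw [mul_pow, ha, zero_mul]) hb
    (by rw [← hab]; ring)
  have hu : IsUnit ((1 + b) ^ (k+4)) := by
    have : IsNilpotent b := ⟨_, hb⟩
    exact (this.isUnit_one_add).pow _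
  rw [mul_pow] at h
  apply hu.mul_left_cancel
  rw [mul_zero, ← h]; ring

open TensorProduct Polynomial in
theorem vanish_aux (V : Type*) [AddCommGroup V] [Module ℝ V]
    (T : V →ₗ[ℝ] V →ₗ[ℝ] V →ₗ[ℝ] ℝ) (g : V ≃ₗ[ℝ] V)
    (hgT : ∀ u v w, T (g u) (g v) (g w) = T u v w) (k : ℕ)
    (D : Module.End ℝ V) (hD : D = (g : Module.End ℝ V) - 1)
    (hk : D ^ (k+6) = 0) (x y z : V) :
    T ((D ^ (k+4)) x) ((D ^ (k+4)) y) z = 0 := by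
  let L : V ⊗[ℝ] V →ₗ[ℝ] (V →ₗ[ℝ] ℝ) := TensorProduct.lift T
  let φ : (ℝ[X] ⊗[ℝ] ℝ[X]) →ₐ[ℝ] Module.End ℝ (V ⊗[ℝ] V) :=
    AlgHom.comp (Module.endTensorEndAlgHom : Module.End ℝ V ⊗[ℝ] Module.End ℝ V →ₐ[ℝ] Module.End ℝ (V ⊗[ℝ] V))
      (Algebra.TensorProduct.map (aeval D) (aeval D))
  have hφ : ∀ p q : ℝ[X], φ (p ⊗ₜ q) = TensorProduct.map (aeval D p) (aeval D q) := by
    intro p q; rfl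
  let I : Ideal (ℝ[X] ⊗[ℝ] ℝ[X]) :=
    { carrier := {p | L ∘ₗ φ p = 0}
      add_mem' := by
        intro p q hp hq
        simp only [Set.mem_ofPred_eq] at *
        rw [map_add, LinearMap.comp_add, hp, hq, add_zero]
      zero_mem' := by simp
      smul_mem' := by
        intro r p hp
        simp only [Set.mem_ofPred_eq, smul_eq_mul] at *
        rw [mul_comm, map_mul, Module.End.mul_eq_comp, ← LinearMap.comp_assoc, hp,
          LinearMap.zero_comp] }
  have hI : ∀ p, p ∈ I ↔ L ∘ₗ φ p = 0 := fun p => Iff.rfl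
  let A : ℝ[X] ⊗[ℝ] ℝ[X] := X ⊗ₜ 1
  let B : ℝ[X] ⊗[ℝ] ℝ[X] := 1 ⊗ₜ X
  have hA : A ^ (k+6) ∈ I := by
    rw [hI, Algebra.TensorProduct.tmul_pow, hφ]; simp [hk]
  have hB : B ^ (k+6) ∈ I := by
    rw [hI, Algebra.TensorProduct.tmul_pow, hφ]; simp [hk]
  have hg1 : 1 + D = (g : Module.End ℝ V) := by rw [hD]; abel
  have hE : φ ((1 + A) * (1 + B) - 1) =
      TensorProduct.map (g : Module.End ℝ V) (g : Module.End ℝ V) - 1 := by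
    have : (1 + A) * (1 + B) = (1 + X) ⊗ₜ (1 + X) := by
      have h1 : 1 + A = (1 + X) ⊗ₜ 1 := by
        rw [TensorProduct.add_tmul]; rfl
      have h2 : 1 + B = 1 ⊗ₜ (1 + X) := by
        rw [TensorProduct.tmul_add]; rfl
      rw [h1, h2, Algebra.TensorProduct.tmul_mul_tmul, one_mul, mul_one]
    rw [this, map_sub, map_one, hφ]
    simp only [map_add, map_one, aeval_X, hg1]
  let G : Module.End ℝ V := (g.symm : Module.End ℝ V) - 1
  have hG : G ^ (k+6) = 0 := by
    have e : G = -((g.symm : Module.End ℝ V) * D) := by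
      ext w; simp [G, hD]
    have c : Commute (g.symm : Module.End ℝ V) D := by
      ext w; simp [hD]
    rw [e, neg_pow, c.mul_pow, hk, mul_zero, mul_zero]
  have hLE : ∀ t z, L ((TensorProduct.map (g : Module.End ℝ V) (g : Module.End ℝ V) - 1) t) z
      = L t (G z) := by
    intro t z
    induction t with
    | zero => simp
    | add p q hp hq => rw [map_add, map_add, map_add, LinearMap.add_apply, LinearMap.add_apply, hp, hq]
    | tmul u v =>
      have := hgT u v (g.symm z)
      simp at this
      simp [L, G, this]
  have hLE' : ∀ n t z, L (((TensorProduct.map (g : Module.End ℝ V) (g : Module.End ℝ V) - 1) ^ n) t) z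
      = L t ((G ^ n) z) := by
    intro n
    induction n with
    | zero => intro t z; simp
    | succ n ih =>
      intro t z
      rw [pow_succ, Module.End.mul_apply, ih, hLE, pow_succ', Module.End.mul_apply]
  have hAB : ((1 + A) * (1 + B) - 1) ^ (k+6) ∈ I := by
    rw [hI, map_pow, hE]
    apply LinearMap.ext; intro t
    apply LinearMap.ext; intro w
    rw [LinearMap.comp_apply, hLE', hG]; simp
  have fin : A ^ (k+4) * B ^ (k+4) ∈ I := by
    have := group_aux (Q := (ℝ[X] ⊗[ℝ] ℝ[X]) ⧸ I) k (Ideal.Quotient.mk I A) (Ideal.Quotient.mk I B)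
      (by rw [← map_pow]; exact Ideal.Quotient.eq_zero_iff_mem.2 hA)
      (by rw [← map_pow]; exact Ideal.Quotient.eq_zero_iff_mem.2 hB)
      (by
        rw [← map_one (Ideal.Quotient.mk I), ← map_add, ← map_add, ← map_mul, ← map_sub, ← map_pow]
        exact Ideal.Quotient.eq_zero_iff_mem.2 hAB)
    rw [← map_pow, ← map_pow, ← map_mul] at this
    exact Ideal.Quotient.eq_zero_iff_mem.1 this
  rw [hI, Algebra.TensorProduct.tmul_pow, Algebra.TensorProduct.tmul_pow,
    Algebra.TensorProduct.tmul_mul_tmul, hφ] at fin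
  have := LinearMap.congr_fun (LinearMap.congr_fun fin (x ⊗ₜ y)) z
  simpa [L] using this


/-- abstract form of Theorem 3.1(1): if `T` is a symmetric trilinear form on a
finite-dimensional real vector space satisfying the Hodge-index condition, and `g` is a
unipotent linear automorphism preserving `T`, then `(g - id)⁵ = 0`, i.e. every Jordan block
of `g` (for the eigenvalue 1) has dimension at most 5. -/
theorem stmt1 (V : Type*) [AddCommGroup V] [Module ℝ V] [FiniteDimensional ℝ V]
    (T : V →ₗ[ℝ] V →ₗ[ℝ] V →ₗ[ℝ] ℝ)
    (hT1 : ∀ u v w, T u v w = T v u w)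
    (hT2 : ∀ u v w, T u v w = T u w v)
    (hHodge : ∀ u v : V, LinearIndependent ℝ ![u, v] →
      ∃ w, T u u w ≠ 0 ∨ T u v w ≠ 0 ∨ T v v w ≠ 0)
    (g : V ≃ₗ[ℝ] V)
    (hgT : ∀ u v w, T (g u) (g v) (g w) = T u v w)
    (hunip : ((g : Module.End ℝ V) - 1) ^ (Module.finrank ℝ V) = 0) :
    ((g : Module.End ℝ V) - 1) ^ 5 = 0 := by
  by_contra h5
  set D : Module.End ℝ V := (g : Module.End ℝ V) - 1 with hD
  classical
  have hex : ∃ n, D ^ n = 0 := ⟨_, hunip⟩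
  have hm := Nat.find_spec hex
  have hmin : ∀ j, j < Nat.find hex → D ^ j ≠ 0 := fun j hj => Nat.find_min hex hj
  have h6 : 6 ≤ Nat.find hex := by
    by_contra hlt
    exact h5 (pow_eq_zero_of_le (by omega) hm)
  obtain ⟨k, hk⟩ := Nat.exists_eq_add_of_le' h6
  rw [hk] at hm hmin
  have hne : D ^ (k+5) ≠ 0 := hmin _ (by omega)
  obtain ⟨v, hv⟩ : ∃ v, (D ^ (k+5)) v ≠ 0 := by
    by_contra hcon
    push Not at hcon
    exact hne (LinearMap.ext hcon)
  have van := vanish_aux V T g hgT k D hD hm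
  have e5 : (D ^ (k+5)) v = (D ^ (k+4)) (D v) := by
    rw [pow_succ, Module.End.mul_apply]
  have e5' : D ((D ^ (k+4)) v) = (D ^ (k+5)) v := by
    rw [← Module.End.mul_apply, ← pow_succ']
  have e6 : D ((D ^ (k+5)) v) = 0 := by
    rw [← Module.End.mul_apply, ← pow_succ', hm]; rfl
  have hli : LinearIndependent ℝ ![(D ^ (k+4)) v, (D ^ (k+5)) v] := by
    rw [LinearIndependent.pair_iff]
    intro s t hst
    have h1 := congrArg D hst
    rw [map_add, map_smul, map_smul, e5', e6, smul_zero, add_zero, map_zero] at h1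
    have hs : s = 0 := (smul_eq_zero.1 h1).resolve_right hv
    rw [hs, zero_smul, zero_add] at hst
    exact ⟨hs, (smul_eq_zero.1 hst).resolve_right hv⟩
  obtain ⟨w, hw⟩ := hHodge _ _ hli
  rw [e5] at hw
  rcases hw with hw | hw | hw
  · exact hw (van _ _ _)
  · exact hw (van _ _ _)
  · exact hw (van _ _ _)
end

section
/- Assume the Hodge-index condition holds for T. Suppose g preserves T, g is unipotent, and g ≠ id. Let N = g − id and let k ≥ 2 be the least positive integer with N^k = 0. Then rank(N^(k−1)) = 1, and rank(N^j) = k − j for every integer j with k + 1 ≤ 2j and j ≤ k. Equivalently, g has a unique Jordan block of maximal dimension k, and every other Jordan block of g has dimension at most (k+1)/2. -/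
/-- Vanishing: if `N^p x = 0`, `N^q y = 0` and `p + q ≤ n + 1` then `T x y (N'^n w) = 0`. -/
theorem aux_zero {V : Type*} [AddCommGroup V] [Module ℝ V]
    (T : V →ₗ[ℝ] V →ₗ[ℝ] V →ₗ[ℝ] ℝ) (N N' : Module.End ℝ V)
    (h : ∀ x y w, T x y (N' w) = T (N x) y w + T x (N y) w + T (N x) (N y) w) (n : ℕ) :
    ∀ (p q : ℕ) (x y w : V), p + q ≤ n + 1 → (N ^ p) x = 0 → (N ^ q) y = 0 →
      T x y ((N' ^ n) w) = 0 := by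
  induction n with
  | zero =>
    intro p q x y w hpq hx hy
    rcases p with _ | p
    · have : x = 0 := by simpa using hx
      simp [this]
    · have hq : q = 0 := by omega
      subst hq
      have : y = 0 := by simpa using hy
      simp [this]
  | succ n ih =>
    intro p q x y w hpq hx hy
    rcases p with _ | p
    · have : x = 0 := by simpa using hx
      simp [this]
    rcases q with _ | q
    · have : y = 0 := by simpa using hy
      simp [this]
    have hx' : (N ^ p) (N x) = 0 := by rw [pow_succ] at hx; exact hx
    have hy' : (N ^ q) (N y) = 0 := by rw [pow_succ] at hy; exact hy
    rw [pow_succ', Module.End.mul_apply, h, ih p (q + 1) _ _ w (by omega) hx' hy,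
      ih (p + 1) q _ _ w (by omega) hx hy', ih p q _ _ w (by omega) hx' hy']
    simp

/-- Leading term formula. -/
theorem aux_lead {V : Type*} [AddCommGroup V] [Module ℝ V]
    (T : V →ₗ[ℝ] V →ₗ[ℝ] V →ₗ[ℝ] ℝ) (N N' : Module.End ℝ V)
    (h : ∀ x y w, T x y (N' w) = T (N x) y w + T x (N y) w + T (N x) (N y) w) (n : ℕ) :
    ∀ (a b : ℕ) (x y w : V), a + b = n → (N ^ (a + 1)) x = 0 → (N ^ (b + 1)) y = 0 →
      T x y ((N' ^ n) w) = (n.choose a : ℝ) * T ((N ^ a) x) ((N ^ b) y) w := by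
  induction n with
  | zero =>
    intro a b x y w hab hx hy
    obtain rfl : a = 0 := by omega
    obtain rfl : b = 0 := by omega
    simp
  | succ n ih =>
    intro a b x y w hab hx hy
    have hx' : (N ^ a) (N x) = 0 := by rw [pow_succ] at hx; exact hx
    have hy' : (N ^ b) (N y) = 0 := by rw [pow_succ] at hy; exact hy
    rw [pow_succ' N' n, Module.End.mul_apply, h,
      aux_zero T N N' h n a b (N x) (N y) w (by omega) hx' hy']
    rcases a with _ | a
    · have hNx : N x = 0 := by simpa using hx'
      rcases b with _ | b
      · omega
      rw [hNx, ih 0 b x (N y) w (by omega) hx hy']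
      simp [pow_succ]
    rcases b with _ | b
    · have hNy : N y = 0 := by simpa using hy'
      rw [hNy, ih a 0 (N x) y w (by omega) hx' hy]
      obtain rfl : a = n := by omega
      simp [pow_succ]
    rw [ih a (b + 1) (N x) y w (by omega) hx' hy, ih (a + 1) b x (N y) w (by omega) hx hy',
      Nat.choose_succ_succ, pow_succ N a, pow_succ N b]
    push_cast
    simp only [Module.End.mul_apply]
    ring

theorem aux_vanish {V : Type*} [AddCommGroup V] [Module ℝ V]
    (T : V →ₗ[ℝ] V →ₗ[ℝ] V →ₗ[ℝ] ℝ) (N N' : Module.End ℝ V)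
    (h : ∀ x y w, T x y (N' w) = T (N x) y w + T x (N y) w + T (N x) (N y) w)
    (k : ℕ) (hN' : N' ^ k = 0) (a b : ℕ) (x y w : V) (hab : k ≤ a + b)
    (hx : (N ^ (a + 1)) x = 0) (hy : (N ^ (b + 1)) y = 0) :
    T ((N ^ a) x) ((N ^ b) y) w = 0 := by
  have h1 := aux_lead T N N' h (a + b) a b x y w rfl hx hy
  have h2 : N' ^ (a + b) = 0 := pow_eq_zero_of_le hab hN'
  rw [h2] at h1
  have h3 : ((a + b).choose a : ℝ) ≠ 0 := by
    exact_mod_cast (Nat.choose_pos (Nat.le_add_right a b)).ne'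
  simpa [h3] using h1.symm

/-- Rank drop along the powers of `N`. -/
theorem aux_rank {V : Type*} [AddCommGroup V] [Module ℝ V] [FiniteDimensional ℝ V]
    (N : Module.End ℝ V) (j : ℕ) (u : V) (hu0 : u ≠ 0) (hu : u ∈ LinearMap.range (N ^ j))
    (hNu : N u = 0)
    (hspan : ∀ y, (N ^ (j + 1)) y = 0 → ∃ c : ℝ, c • u = (N ^ j) y) :
    Module.finrank ℝ (LinearMap.range (N ^ j)) =
      Module.finrank ℝ (LinearMap.range (N ^ (j + 1))) + 1 := by
  have h1 := LinearMap.finrank_range_add_finrank_ker (N.domRestrict (LinearMap.range (N ^ j)))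
  have h2 : LinearMap.range (N.domRestrict (LinearMap.range (N ^ j))) =
      LinearMap.range (N ^ (j + 1)) := by
    rw [LinearMap.range_domRestrict, pow_succ', Module.End.mul_eq_comp, LinearMap.range_comp]
  have h3 : Module.finrank ℝ (LinearMap.ker (N.domRestrict (LinearMap.range (N ^ j)))) = 1 := by
    rw [finrank_eq_one_iff']
    refine ⟨⟨⟨u, hu⟩, by simpa using hNu⟩, ?_, ?_⟩
    · intro h0
      apply hu0
      simpa [Subtype.ext_iff] using h0
    · rintro ⟨⟨_, y, rfl⟩, hy⟩
      have hy' : (N ^ (j + 1)) y = 0 := by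
        rw [pow_succ']
        simpa using hy
      obtain ⟨c, hc⟩ := hspan y hy'
      exact ⟨c, by ext; simpa using hc⟩
  rw [h2, h3] at h1
  exact h1.symm

/-- abstract form of Proposition 3.3: in the Hodge-index setting, a non-trivial
unipotent `T`-preserving automorphism `g` with `N = g - id`, `N^k = 0`, `k ≥ 2` minimal, has
`rank N^(k-1) = 1` and `rank N^j = k - j` whenever `k + 1 ≤ 2j ≤ 2k`: `g` has a unique Jordan
block of maximal dimension `k` and all other Jordan blocks have dimension at most `(k+1)/2`. -/
theorem stmt2 (V : Type*) [AddCommGroup V] [Module ℝ V] [FiniteDimensional ℝ V]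
    (T : V →ₗ[ℝ] V →ₗ[ℝ] V →ₗ[ℝ] ℝ)
    (hT1 : ∀ u v w, T u v w = T v u w)
    (hT2 : ∀ u v w, T u v w = T u w v)
    (hHodge : ∀ u v : V, LinearIndependent ℝ ![u, v] →
      ∃ w, T u u w ≠ 0 ∨ T u v w ≠ 0 ∨ T v v w ≠ 0)
    (g : V ≃ₗ[ℝ] V)
    (hgT : ∀ u v w, T (g u) (g v) (g w) = T u v w)
    (hunip : ((g : Module.End ℝ V) - 1) ^ (Module.finrank ℝ V) = 0)
    (hne : (g : Module.End ℝ V) ≠ 1)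
    (k : ℕ) (hk : 2 ≤ k)
    (hNk : ((g : Module.End ℝ V) - 1) ^ k = 0)
    (hkmin : ∀ m : ℕ, 0 < m → ((g : Module.End ℝ V) - 1) ^ m = 0 → k ≤ m) :
    Module.finrank ℝ (LinearMap.range (((g : Module.End ℝ V) - 1) ^ (k - 1))) = 1 ∧
    ∀ j : ℕ, k + 1 ≤ 2 * j → j ≤ k →
      Module.finrank ℝ (LinearMap.range (((g : Module.End ℝ V) - 1) ^ j)) = k - j := by
  have hg : ∀ x, g x = x + ((g : Module.End ℝ V) - 1) x := by intro x; simp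
  have hcomm : ((g.symm : Module.End ℝ V) - 1) =
      -((g.symm : Module.End ℝ V) * ((g : Module.End ℝ V) - 1)) := by
    ext x; simp
  have hc : Commute (g.symm : Module.End ℝ V) ((g : Module.End ℝ V) - 1) := by
    ext x; simp
  have hN' : ((g.symm : Module.End ℝ V) - 1) ^ k = 0 := by
    rw [hcomm, neg_pow, hc.mul_pow, hNk]; simp
  have hT : ∀ x y w, T x y (((g.symm : Module.End ℝ V) - 1) w) =
      T (((g : Module.End ℝ V) - 1) x) y w + T x (((g : Module.End ℝ V) - 1) y) w +
      T (((g : Module.End ℝ V) - 1) x) (((g : Module.End ℝ V) - 1) y) w := by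
    intro x y w
    have h1 := hgT x y (g.symm w)
    rw [LinearEquiv.apply_symm_apply] at h1
    simp only [LinearMap.sub_apply, Module.End.one_apply, map_sub, LinearEquiv.coe_coe, ← h1]
    ring
  generalize hNdef : ((g : Module.End ℝ V) - 1) = N at *
  generalize ((g.symm : Module.End ℝ V) - 1) = N' at *
  have hne0 : N ^ (k - 1) ≠ 0 := by
    intro h0
    have := hkmin (k - 1) (by omega) h0
    omega
  obtain ⟨x, hx⟩ : ∃ x, (N ^ (k - 1)) x ≠ 0 := by
    by_contra! hcon
    exact hne0 (LinearMap.ext hcon)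
  have hk1 : k - 1 + 1 = k := by omega
  have hxk : (N ^ (k - 1 + 1)) x = 0 := by rw [hk1, hNk]; simp
  have step : ∀ j, k ≤ 2 * j → j + 1 ≤ k → Module.finrank ℝ (LinearMap.range (N ^ j)) =
      Module.finrank ℝ (LinearMap.range (N ^ (j + 1))) + 1 := by
    intro j hj hjk
    refine aux_rank N j ((N ^ (k - 1)) x) hx ?_ ?_ ?_
    · refine ⟨(N ^ (k - 1 - j)) x, ?_⟩
      rw [← Module.End.mul_apply, ← pow_add]
      congr 2
      omega
    · rw [← Module.End.mul_apply, ← pow_succ']; exact hxk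
    · intro y hy
      by_contra! hcon
      have hli : LinearIndependent ℝ ![(N ^ (k - 1)) x, (N ^ j) y] :=
        (LinearIndependent.pair_iff' hx).2 hcon
      obtain ⟨w, hw | hw | hw⟩ := hHodge _ _ hli
      · exact hw (aux_vanish T N N' hT k hN' _ _ x x w (by omega) hxk hxk)
      · exact hw (aux_vanish T N N' hT k hN' _ _ x y w (by omega) hxk hy)
      · exact hw (aux_vanish T N N' hT k hN' _ _ y y w (by omega) hy hy)
  have main : ∀ d j, j + d = k → k ≤ 2 * j →
      Module.finrank ℝ (LinearMap.range (N ^ j)) = d := by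
    intro d
    induction d with
    | zero =>
      intro j hj _
      obtain rfl : j = k := by omega
      rw [hNk]; simp
    | succ d ih =>
      intro j hj hj2
      rw [step j hj2 (by omega), ih (j + 1) (by omega) (by omega)]
  exact ⟨main 1 (k - 1) (by omega) (by omega),
    fun j h1 h2 => main (k - j) j (by omega) (by omega)⟩
end

section
/- Suppose λ, λ' ∈ ℂ are such that either λ ≠ λ' and both are eigenvalues of g, or λ = λ' is an eigenvalue of g whose eigenspace has dimension at least 2. If the Hodge-index condition holds for (T, σ), then at least one of the three complex numbers (λ·conj(λ))⁻¹, (λ·conj(λ'))⁻¹, (λ'·conj(λ'))⁻¹ is an eigenvalue of g. -/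
/-- abstract form of the Key Lemma 4.1: in the complex Hodge-index setting,
if `l, l'` are distinct eigenvalues of `g` (or `l = l'` is an eigenvalue with eigenspace of
dimension at least 2), then one of `(l·conj l)⁻¹`, `(l·conj l')⁻¹`, `(l'·conj l')⁻¹` is an
eigenvalue of `g`. -/
theorem stmt3 (V : Type*) [AddCommGroup V] [Module ℂ V] [FiniteDimensional ℂ V]
    (σ : V →ₛₗ[starRingEnd ℂ] V) (hσ : ∀ v, σ (σ v) = v)
    (T : V →ₗ[ℂ] V →ₗ[ℂ] V →ₗ[ℂ] ℂ)
    (hT1 : ∀ u v w, T u v w = T v u w)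
    (hT2 : ∀ u v w, T u v w = T u w v)
    (g : V ≃ₗ[ℂ] V)
    (hgσ : ∀ v, g (σ v) = σ (g v))
    (hgT : ∀ u v w, T (g u) (g v) (g w) = T u v w)
    (hHodge : ∀ u v : V, LinearIndependent ℂ ![u, v] →
      ∃ w, T u (σ u) w ≠ 0 ∨ T u (σ v) w ≠ 0 ∨ T v (σ v) w ≠ 0)
    (l l' : ℂ)
    (h : (l ≠ l' ∧ Module.End.HasEigenvalue (g : Module.End ℂ V) l ∧
            Module.End.HasEigenvalue (g : Module.End ℂ V) l') ∨
         (l = l' ∧ 2 ≤ Module.finrank ℂ (Module.End.eigenspace (g : Module.End ℂ V) l))) :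
    Module.End.HasEigenvalue (g : Module.End ℂ V) (l * (starRingEnd ℂ) l)⁻¹ ∨
    Module.End.HasEigenvalue (g : Module.End ℂ V) (l * (starRingEnd ℂ) l')⁻¹ ∨
    Module.End.HasEigenvalue (g : Module.End ℂ V) (l' * (starRingEnd ℂ) l')⁻¹ := by
  have key : ∀ (a b : ℂ) (u v w : V), g u = a • u → g v = b • v → T u (σ v) w ≠ 0 →
      Module.End.HasEigenvalue (g : Module.End ℂ V) (a * (starRingEnd ℂ) b)⁻¹ := by
    intro a b u v w hu hv hne
    have hφ : ∀ x, (a * (starRingEnd ℂ) b) * T u (σ v) (g x) = T u (σ v) x := by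
      intro x
      have h1 := hgT u (σ v) x
      rw [hgσ, hu, hv] at h1
      simp only [LinearMap.map_smulₛₗ, map_smul, LinearMap.smul_apply, smul_eq_mul] at h1
      rw [← h1]
      ring
    have hc : a * (starRingEnd ℂ) b ≠ 0 := by
      intro h0
      apply hne
      rw [← hφ w, h0, zero_mul]
    by_contra hno
    unfold Module.End.HasEigenvalue Module.End.HasUnifEigenvalue at hno
    rw [not_not] at hno
    change Module.End.eigenspace (g : Module.End ℂ V) _ = ⊥ at hno
    rw [Module.End.eigenspace_def] at hno
    have hs := LinearMap.surjective_of_injective (LinearMap.ker_eq_bot.mp hno)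
    obtain ⟨x, hx⟩ := hs w
    apply hne
    rw [← hx]
    simp only [LinearMap.sub_apply, Module.algebraMap_end_apply, map_sub, map_smul, smul_eq_mul,
      Module.End.smul_def, LinearMap.smul_apply, LinearEquiv.coe_coe, Module.End.one_apply]
    rw [← hφ x]
    rw [inv_mul_cancel_left₀ hc, sub_self]
  have pair : ∃ u v : V, g u = l • u ∧ g v = l' • v ∧ LinearIndependent ℂ ![u, v] := by
    rcases h with ⟨hne, h1, h2⟩ | ⟨rfl, h2⟩
    · obtain ⟨u, hu⟩ := h1.exists_hasEigenvector
      obtain ⟨v, hv⟩ := h2.exists_hasEigenvector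
      refine ⟨u, v, hu.apply_eq_smul, hv.apply_eq_smul, ?_⟩
      apply Module.End.eigenvectors_linearIndependent' (g : Module.End ℂ V) ![l, l']
      · intro i j hij
        fin_cases i <;> fin_cases j <;> simp_all
      · intro i
        fin_cases i
        · exact hu
        · exact hv
    · obtain ⟨f, hf⟩ := exists_linearIndependent_of_le_finrank h2
      refine ⟨f 0, f 1, Module.End.mem_eigenspace_iff.mp (f 0).2,
        Module.End.mem_eigenspace_iff.mp (f 1).2, ?_⟩
      have h3 := hf.map' (Submodule.subtype _) (Submodule.ker_subtype _)
      have h4 : ![(f 0 : V), (f 1 : V)] =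
          (Module.End.eigenspace (g : Module.End ℂ V) l).subtype ∘ f := by
        ext i
        fin_cases i <;> rfl
      rw [h4]
      exact h3
  obtain ⟨u, v, hu, hv, hli⟩ := pair
  obtain ⟨w, hw | hw | hw⟩ := hHodge u v hli
  · exact Or.inl (key l l u u w hu hu hw)
  · exact Or.inr (Or.inl (key l l' u v w hu hv hw))
  · exact Or.inr (Or.inr (key l' l' v v w hv hv hw))
end

section
/- Let E be a real vector space of finite dimension r ≥ 1 and let W be a finite subset of E that spans E. Then there exist elements w₁, …, w_r of W and linear functionals α₁, …, α_r on E such that: (w₁, …, w_r) is a basis of E; (α₁, …, α_r) is a basis of the dual space E^∨; for each i, |α_i(w_i)| = max over w ∈ W of |α_i(w)|; and α_i(w_j) = 0 whenever i > j. -/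
theorem adapted_aux (E : Type*) [AddCommGroup E] [Module ℝ E] [FiniteDimensional ℝ E]
    (W : Finset E) (hspan : Submodule.span ℝ (W : Set E) = ⊤) (k : ℕ)
    (hk : k ≤ Module.finrank ℝ E) :
    ∃ (w : Fin k → E) (α : Fin k → Module.Dual ℝ E),
      (∀ i, w i ∈ W) ∧ (∀ i, α i (w i) ≠ 0) ∧
      (∀ i, ∀ x ∈ W, |α i x| ≤ |α i (w i)|) ∧
      (∀ i j : Fin k, j < i → α i (w j) = 0) := by
  induction k with
  | zero => exact ⟨Fin.elim0, Fin.elim0, fun i => i.elim0, fun i => i.elim0,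
      fun i => i.elim0, fun i => i.elim0⟩
  | succ k ih =>
    obtain ⟨w, α, h1, h2, h3, h4⟩ := ih (by omega)
    have hlt : Submodule.span ℝ (Set.range w) < ⊤ := by
      rw [lt_top_iff_ne_top]
      intro h
      have := finrank_range_le_card (R := ℝ) w
      rw [Set.finrank, h, finrank_top, Fintype.card_fin] at this
      omega
    obtain ⟨f, hf, hle⟩ := Submodule.exists_le_ker_of_lt_top _ hlt
    have hne : W.Nonempty := by
      by_contra h
      rw [Finset.not_nonempty_iff_eq_empty] at h
      subst h
      apply hf
      apply LinearMap.ext_on (s := ((∅ : Finset E) : Set E)) hspan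
      simp
    obtain ⟨x, hx, hmax⟩ := W.exists_max_image (fun x => |f x|) hne
    have hfx : f x ≠ 0 := by
      intro h0
      apply hf
      apply LinearMap.ext_on (s := (W : Set E)) hspan
      intro y hy
      have := hmax y hy
      simpa [h0] using this
    refine ⟨Fin.snoc w x, Fin.snoc α f, ?_, ?_, ?_, ?_⟩
    · intro i
      refine Fin.lastCases ?_ (fun i => ?_) i
      · simpa using hx
      · simpa using h1 i
    · intro i
      refine Fin.lastCases ?_ (fun i => ?_) i
      · simpa using hfx
      · simpa using h2 i
    · intro i
      refine Fin.lastCases ?_ (fun i => ?_) i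
      · simpa using hmax
      · simpa using h3 i
    · intro i j
      refine Fin.lastCases ?_ (fun i => ?_) i
      · refine Fin.lastCases ?_ (fun j => ?_) j
        · simp
        · intro _
          simpa using hle (Submodule.subset_span ⟨j, rfl⟩)
      · refine Fin.lastCases ?_ (fun j => ?_) j
        · intro h
          exact absurd h (not_lt.2 (Fin.le_last _))
        · intro h
          simpa using h4 i j (by simpa using h)


/-- Lemma 4.4, existence of an adapted basis: if `W` is a finite spanning
subset of a real vector space `E` of dimension `r ≥ 1`, there are `w₁, …, w_r ∈ W` forming a
basis of `E` and a basis `α₁, …, α_r` of the dual space such that each `w_i` is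
`α_i`-maximal in `W` and `α_i (w_j) = 0` whenever `i > j`. -/
theorem stmt16 (E : Type*) [AddCommGroup E] [Module ℝ E] [FiniteDimensional ℝ E]
    (r : ℕ) (hr : 1 ≤ r) (hrank : Module.finrank ℝ E = r)
    (W : Finset E) (hspan : Submodule.span ℝ (W : Set E) = ⊤) :
    ∃ (w : Fin r → E) (α : Fin r → Module.Dual ℝ E),
      (∀ i, w i ∈ W) ∧
      LinearIndependent ℝ w ∧ Submodule.span ℝ (Set.range w) = ⊤ ∧
      LinearIndependent ℝ α ∧ Submodule.span ℝ (Set.range α) = ⊤ ∧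
      (∀ i, ∀ x ∈ W, |α i x| ≤ |α i (w i)|) ∧
      (∀ i j : Fin r, j < i → α i (w j) = 0) := by

  obtain ⟨w, α, h1, h2, h3, h4⟩ := adapted_aux E W hspan r hrank.ge
  let M : Matrix (Fin r) (Fin r) ℝ := Matrix.of fun i j => α i (w j)
  have hM : M.det ≠ 0 := by
    rw [Matrix.det_of_upperTriangular (M := M) (fun i j h => h4 i j h)]
    exact Finset.prod_ne_zero_iff.2 fun i _ => h2 i
  have hw : LinearIndependent ℝ w := by
    rw [Fintype.linearIndependent_iff]
    intro c hc
    refine congrFun (Matrix.eq_zero_of_mulVec_eq_zero hM (v := c) ?_)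
    funext i
    have := congrArg (α i) hc
    simpa [M, Matrix.mulVec, dotProduct, mul_comm] using this
  have hα : LinearIndependent ℝ α := by
    rw [Fintype.linearIndependent_iff]
    intro c hc
    refine congrFun (Matrix.eq_zero_of_vecMul_eq_zero hM (v := c) ?_)
    funext j
    have := LinearMap.congr_fun hc (w j)
    simpa [M, Matrix.vecMul, dotProduct] using this
  exact ⟨w, α, h1, hw, hw.span_eq_top_of_card_eq_finrank' (by simp [hrank]), hα,
    hα.span_eq_top_of_card_eq_finrank' (by simp [Subspace.dual_finrank_eq, hrank]), h3, h4⟩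
end

section
/- Let E be a real vector space, ι a finite index set, and w : ι → E a family of vectors with the following property: for any two distinct indices i ≠ j in ι, at least one of the three vectors −2·w(i), −(w(i) + w(j)), −2·w(j) belongs to the image {w(l) : l ∈ ι}. Then the linear span of {w(l) : l ∈ ι} has dimension at most 2. -/
/-- Given a functional bounded by one on `S`, whose active elements do not span `S`, one can
enlarge the set of active elements. -/
theorem stmt17_step {E : Type*} [AddCommGroup E] [Module ℝ E] (S : Finset E) (f : E →ₗ[ℝ] ℝ)
    (hf : ∀ s ∈ S, |f s| ≤ 1) (x : E) (hx : x ∈ S)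
    (hxA : x ∉ Submodule.span ℝ ((S.filter (fun s => |f s| = 1) : Finset E) : Set E)) :
    ∃ f' : E →ₗ[ℝ] ℝ, (∀ s ∈ S, |f' s| ≤ 1) ∧
      S.filter (fun s => |f s| = 1) ⊂ S.filter (fun s => |f' s| = 1) := by
  obtain ⟨g, hgx, hg⟩ := Submodule.exists_le_ker_of_notMem hxA
  have hgA : ∀ s ∈ S, |f s| = 1 → g s = 0 := by
    intro s hs h1
    have : s ∈ Submodule.span ℝ ((S.filter (fun s => |f s| = 1) : Finset E) : Set E) :=
      Submodule.subset_span (by simp [hs, h1])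
    simpa using hg this
  let τ : E → ℝ := fun s => (|g s| - f s * g s) / (g s) ^ 2
  obtain ⟨y, hy, hmin⟩ := (S.filter (fun s => g s ≠ 0)).exists_min_image τ
    ⟨x, by simp [hx, hgx]⟩
  simp only [Finset.mem_filter] at hy hmin
  have key : ∀ s, g s ≠ 0 → τ s * (g s) ^ 2 = |g s| - f s * g s := by
    intro s hs
    simp only [τ]
    field_simp
  have ht0 : 0 ≤ τ y := by
    apply div_nonneg _ (sq_nonneg _)
    have := le_abs_self (f y * g y)
    rw [abs_mul] at this
    have h2 := mul_le_mul_of_nonneg_right (hf y hy.1) (abs_nonneg (g y))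
    linarith
  have hyact : |f y + τ y * g y| = 1 := by
    have hk := key y hy.2
    rcases lt_or_gt_of_ne hy.2 with h | h
    · rw [abs_of_neg h] at hk
      have : f y + τ y * g y = -1 := by
        apply mul_right_cancel₀ hy.2
        linarith
      rw [this]; simp
    · rw [abs_of_pos h] at hk
      have : f y + τ y * g y = 1 := by
        apply mul_right_cancel₀ hy.2
        linarith
      rw [this]; simp
  refine ⟨f + τ y • g, ?_, ?_⟩
  · intro s hs
    simp only [LinearMap.add_apply, LinearMap.smul_apply, smul_eq_mul]
    by_cases h0 : g s = 0
    · simpa [h0] using hf s hs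
    have hk := key s h0
    have hm := hmin s ⟨hs, h0⟩
    have hfs := abs_le.mp (hf s hs)
    rw [abs_le]
    rcases lt_or_gt_of_ne h0 with h | h
    · rw [abs_of_neg h] at hk
      have e : f s + τ s * g s = -1 := by
        apply mul_right_cancel₀ h0
        linarith
      constructor <;> nlinarith
    · rw [abs_of_pos h] at hk
      have e : f s + τ s * g s = 1 := by
        apply mul_right_cancel₀ h0
        linarith
      constructor <;> nlinarith
  · rw [Finset.ssubset_iff_of_subset]
    · refine ⟨y, ?_, ?_⟩
      · simp [hy.1, hyact]
      · intro h
        rw [Finset.mem_filter] at h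
        exact hy.2 (hgA y hy.1 h.2)
    · intro s hs
      rw [Finset.mem_filter] at hs ⊢
      refine ⟨hs.1, ?_⟩
      simp [hgA s hs.1 hs.2, hs.2]

theorem stmt17_exists {E : Type*} [AddCommGroup E] [Module ℝ E] (S : Finset E) :
    ∃ f : E →ₗ[ℝ] ℝ, (∀ s ∈ S, |f s| ≤ 1) ∧
      ∀ x ∈ S, x ∈ Submodule.span ℝ ((S.filter (fun s => |f s| = 1) : Finset E) : Set E) := by
  by_contra hcon
  push Not at hcon
  have : ∀ n : ℕ, ∃ f : E →ₗ[ℝ] ℝ, (∀ s ∈ S, |f s| ≤ 1) ∧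
      n ≤ (S.filter (fun s => |f s| = 1)).card := by
    intro n
    induction n with
    | zero => exact ⟨0, by simp, by simp⟩
    | succ n ih =>
      obtain ⟨f, hf, hn⟩ := ih
      obtain ⟨x, hx, hxA⟩ := hcon f hf
      obtain ⟨f', hf', hss⟩ := stmt17_step S f hf x hx hxA
      have := Finset.card_lt_card hss
      exact ⟨f', hf', by omega⟩
  obtain ⟨f, -, hn⟩ := this (S.card + 1)
  have := Finset.card_filter_le S (fun s => |f s| = 1)
  omega

/-- combinatorial content of Lemma 4.6, "the split-rank is at most 2": if
`w : ι → E` is a finite family of vectors in a real vector space such that for any two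
distinct indices `i ≠ j` at least one of `-2·w i`, `-(w i + w j)`, `-2·w j` lies in the image
of `w`, then the span of the image of `w` has dimension at most 2. -/
theorem stmt17 (E : Type*) [AddCommGroup E] [Module ℝ E]
    (ι : Type*) [Fintype ι] (w : ι → E)
    (h : ∀ i j : ι, i ≠ j →
      ((-2 : ℝ) • w i ∈ Set.range w ∨ -(w i + w j) ∈ Set.range w ∨
        (-2 : ℝ) • w j ∈ Set.range w)) :
    Module.finrank ℝ (Submodule.span ℝ (Set.range w)) ≤ 2 := by
  classical
  obtain ⟨f, hf, hspan⟩ := stmt17_exists (Finset.univ.image w)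
  have hb : ∀ x ∈ Set.range w, |f x| ≤ 1 := by
    rintro _ ⟨i, rfl⟩
    exact hf _ (by simp)
  set A := (Finset.univ.image w).filter (fun s => |f s| = 1) with hA
  -- two distinct values cannot share the same extremal value
  have huniq : ∀ c : ℝ, |c| = 1 → ∀ u ∈ Set.range w, ∀ v ∈ Set.range w,
      f u = c → f v = c → u = v := by
    rintro c hc _ ⟨i, rfl⟩ _ ⟨j, rfl⟩ hi hj
    by_contra hne
    have hij : i ≠ j := fun e => hne (by rw [e])
    rcases h i j hij with h1 | h1 | h1
    · have := hb _ h1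
      rw [map_smul, hi, smul_eq_mul, abs_mul, hc] at this
      norm_num at this
    · have := hb _ h1
      rw [map_neg, map_add, hi, hj, ← two_mul, abs_neg, abs_mul, hc] at this
      norm_num at this
    · have := hb _ h1
      rw [map_smul, hj, smul_eq_mul, abs_mul, hc] at this
      norm_num at this
  have hcard : A.card ≤ 2 := by
    have himg : A.card ≤ ({1, -1} : Finset ℝ).card := by
      apply Finset.card_le_card_of_injOn f
      · intro s hs
        have hs' : |f s| = 1 := by
          have := (Finset.mem_filter.mp (Finset.mem_coe.mp hs)).2
          exact this
        rcases eq_or_eq_neg_of_abs_eq hs' with e | e <;> simp [e]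
      · intro u hu v hv huv
        have hu' := Finset.mem_filter.mp (Finset.mem_coe.mp hu)
        have hv' := Finset.mem_filter.mp (Finset.mem_coe.mp hv)
        exact huniq (f v) hv'.2 u (by simpa using hu'.1) v (by simpa using hv'.1) huv rfl
    exact himg.trans Finset.card_le_two
  have hle : Submodule.span ℝ (Set.range w) ≤ Submodule.span ℝ (A : Set E) := by
    rw [Submodule.span_le]
    rintro _ ⟨i, rfl⟩
    exact hspan _ (by simp)
  have hfin := Submodule.finrank_mono hle
  exact hfin.trans ((finrank_span_finset_le_card A).trans hcard)
end

section
/- Let V be a real vector space of finite even dimension 2n with n ≥ 1, and let f be a linear automorphism of V whose characteristic polynomial has 2n distinct complex roots, none of which is real. Then there exists a linear endomorphism J of V with J ∘ J = −id which commutes with f, i.e. f ∘ J = J ∘ f. -/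
open Polynomial in
/-- The real part of a complex polynomial. -/
theorem aux_real_part (p : Polynomial ℂ) : ∃ q : Polynomial ℝ, ∀ z : ℂ,
    (q.map (algebraMap ℝ ℂ)).eval z =
      (p.eval z + (starRingEnd ℂ) (p.eval ((starRingEnd ℂ) z))) / 2 := by
  induction p using Polynomial.induction_on' with
  | add p₁ p₂ h₁ h₂ =>
    obtain ⟨q₁, h₁⟩ := h₁
    obtain ⟨q₂, h₂⟩ := h₂
    refine ⟨q₁ + q₂, fun z => ?_⟩
    rw [Polynomial.map_add, eval_add, h₁, h₂, eval_add, eval_add, map_add]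
    ring
  | monomial k a =>
    refine ⟨monomial k a.re, fun z => ?_⟩
    rw [Polynomial.map_monomial, eval_monomial, eval_monomial, eval_monomial, map_mul, map_pow,
      Complex.conj_conj]
    have h : (algebraMap ℝ ℂ) a.re = (a + (starRingEnd ℂ) a) / 2 := by
      rw [Complex.add_conj]; simp
    rw [h]; ring

/-- linear-algebra step in Lemma 5.13: a linear automorphism `f` of a real
vector space of dimension `2n` whose characteristic polynomial has `2n` distinct complex
roots, none real, commutes with some complex structure `J` (`J ∘ J = -id`). -/
theorem stmt19 (V : Type*) [AddCommGroup V] [Module ℝ V] [FiniteDimensional ℝ V]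
    (n : ℕ) (hn : 1 ≤ n) (hdim : Module.finrank ℝ V = 2 * n)
    (f : V ≃ₗ[ℝ] V)
    (hnodup : (((LinearMap.charpoly (f : V →ₗ[ℝ] V)).map (algebraMap ℝ ℂ)).roots).Nodup)
    (hcard : (((LinearMap.charpoly (f : V →ₗ[ℝ] V)).map (algebraMap ℝ ℂ)).roots).card = 2 * n)
    (hnonreal : ∀ z ∈ ((LinearMap.charpoly (f : V →ₗ[ℝ] V)).map (algebraMap ℝ ℂ)).roots,
      z.im ≠ 0) :
    ∃ J : V →ₗ[ℝ] V, J ∘ₗ J = -LinearMap.id ∧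
      (f : V →ₗ[ℝ] V) ∘ₗ J = J ∘ₗ (f : V →ₗ[ℝ] V) := by
  classical
  set c : Polynomial ℝ := LinearMap.charpoly (f : V →ₗ[ℝ] V) with hc
  set P : Polynomial ℂ := c.map (algebraMap ℝ ℂ) with hP
  have hmon : c.Monic := LinearMap.charpoly_monic _
  have hP0 : P ≠ 0 := (hmon.map _).ne_zero
  let g : ℂ → ℂ := fun z => if 0 < z.im then Complex.I else -Complex.I
  let p : Polynomial ℂ := Lagrange.interpolate P.roots.toFinset id g
  have hp : ∀ z ∈ P.roots, p.eval z = g z := fun z hz =>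
    Lagrange.eval_interpolate_at_node (v := id) g (Set.injOn_id _) (Multiset.mem_toFinset.2 hz)
  have hconj : ∀ z ∈ P.roots, (starRingEnd ℂ) z ∈ P.roots := by
    intro z hz
    rw [Polynomial.mem_roots hP0, Polynomial.IsRoot.def] at hz ⊢
    rw [hP, Polynomial.eval_map_algebraMap] at hz ⊢
    rw [Polynomial.aeval_conj, hz, map_zero]
  obtain ⟨q, hq⟩ := aux_real_part p
  have hq' : ∀ z ∈ P.roots, (q.map (algebraMap ℝ ℂ)).eval z ^ 2 + 1 = 0 := by
    intro z hz
    have him := hnonreal z hz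
    rw [hq, hp z hz, hp _ (hconj z hz)]
    simp only [g, Complex.conj_im]
    rcases lt_or_gt_of_ne him with h | h
    · rw [if_neg (by linarith), if_pos (by linarith), Complex.conj_I]
      ring_nf; simp
    · rw [if_pos (by linarith), if_neg (by linarith), map_neg, Complex.conj_I]
      ring_nf; simp
  have hdvd : c ∣ q ^ 2 + 1 := by
    rw [← Polynomial.map_dvd_map' (algebraMap ℝ ℂ)]
    by_cases h0 : (q ^ 2 + 1).map (algebraMap ℝ ℂ) = 0
    · rw [h0]; exact dvd_zero _
    · refine (IsAlgClosed.splits P).dvd_of_roots_le_roots hP0 ?_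
      rw [Multiset.le_iff_subset hnodup]
      intro z hz
      rw [Polynomial.mem_roots h0, Polynomial.IsRoot.def]
      simpa using hq' z hz
  have haev : Polynomial.aeval (f : V →ₗ[ℝ] V) (q ^ 2 + 1) = 0 := by
    obtain ⟨r, hr⟩ := hdvd
    rw [hr, map_mul, hc, LinearMap.aeval_self_charpoly, zero_mul]
  refine ⟨Polynomial.aeval (f : V →ₗ[ℝ] V) q, ?_, ?_⟩
  · rw [map_add, map_pow, map_one, pow_two] at haev
    exact eq_neg_of_add_eq_zero_left haev
  · have := (Polynomial.commute_X q).map (Polynomial.aeval (f : V →ₗ[ℝ] V))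
    rw [Polynomial.aeval_X] at this
    exact this
end
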